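/- Let G be a chordal graph and let u and w be two distinct non-adjacent simplicial vertices of G. Then the number of perfect elimination orderings of G is at least the number of perfect elimination orderings of G − u plus the number of perfect elimination orderings of G − w. -/

import Mathlib

open SimpleGraph

/-- `G` is chordal: every cycle of length at least 4 has a chord, i.e. an edge of `G`
joining two non-consecutive vertices of the cycle. -/
def IsChordal {V : Type*} (G : SimpleGraph V) : Prop :=
  ∀ (u : V) (p : G.Walk u u), p.IsCycle → 4 ≤ p.length →
    ∃ a b : V, a ∈ p.support ∧ b ∈ p.support ∧ G.Adj a b ∧ s(a, b) ∉ p.edges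

/-- `σ` is a perfect elimination ordering of `G`: for each `i`, the neighbours of
`σ i` occurring later in the ordering form a clique. -/
def IsPEO {V : Type*} {n : ℕ} (G : SimpleGraph V) (σ : Fin n ≃ V) : Prop :=
  ∀ i : Fin n, G.IsClique {w : V | G.Adj (σ i) w ∧ ∃ j : Fin n, i < j ∧ σ j = w}

/-- The number of perfect elimination orderings of `G`. -/
noncomputable def numPEO {V : Type*} [Fintype V] (G : SimpleGraph V) : ℕ :=
  {σ : Fin (Fintype.card V) ≃ V | IsPEO G σ}.ncard

def extEquiv {V : Type*} [DecidableEq V] (v : V) {n m : ℕ} (h : n = m + 1)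
    (τ : Fin m ≃ {z : V | z ≠ v}) : Fin n ≃ V :=
  ((finCongr h).trans (finSuccEquiv m)).trans
    ((Equiv.optionCongr τ).trans (Equiv.optionSubtypeNe v))

theorem extEquiv_zero {V : Type*} [DecidableEq V] (v : V) {m : ℕ}
    (τ : Fin m ≃ {z : V | z ≠ v}) : extEquiv v rfl τ 0 = v := by
  simp [extEquiv]
  exact Equiv.optionSubtypeNe_none v

theorem extEquiv_succ {V : Type*} [DecidableEq V] (v : V) {m : ℕ}
    (τ : Fin m ≃ {z : V | z ≠ v}) (i : Fin m) : extEquiv v rfl τ i.succ = (τ i : V) := by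
  simp [extEquiv]
  exact Equiv.optionSubtypeNe_some v (τ i)

theorem extEquiv_inj {V : Type*} [DecidableEq V] (v : V) {n m : ℕ} (h : n = m + 1) :
    Function.Injective (extEquiv v h) := by
  subst h
  intro τ τ' e
  ext i
  rw [← extEquiv_succ, ← extEquiv_succ, e]

theorem extEquiv_peo {V : Type*} [DecidableEq V] (G : SimpleGraph V) (v : V)
    (hv : G.IsClique (G.neighborSet v)) {n m : ℕ} (h : n = m + 1)
    (τ : Fin m ≃ {z : V | z ≠ v}) (hτ : IsPEO (G.induce {z : V | z ≠ v}) τ) :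
    IsPEO G (extEquiv v h τ) := by
  subst h
  intro i
  refine Fin.cases ?_ (fun i => ?_) i
  · rw [extEquiv_zero]
    exact hv.subset (fun x hx => hx.1)
  · rw [extEquiv_succ]
    rintro x ⟨hx, j, hj, rfl⟩ y ⟨hy, k, hk, rfl⟩ hne
    obtain ⟨j, rfl⟩ := Fin.exists_succ_eq.2 (Fin.ne_zero_of_lt hj)
    obtain ⟨k, rfl⟩ := Fin.exists_succ_eq.2 (Fin.ne_zero_of_lt hk)
    rw [extEquiv_succ] at *
    rw [extEquiv_succ] at *
    exact hτ i (x := τ j) ⟨hx, j, Fin.succ_lt_succ_iff.1 hj, rfl⟩ (y := τ k)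
      ⟨hy, k, Fin.succ_lt_succ_iff.1 hk, rfl⟩ (fun e => hne (congrArg _ e))

theorem extEquiv_ne {V : Type*} [DecidableEq V] (u w : V) (huw : u ≠ w) {n m k : ℕ}
    (h : n = m + 1) (h' : n = k + 1) (τ : Fin m ≃ {z : V | z ≠ u})
    (τ' : Fin k ≃ {z : V | z ≠ w}) : extEquiv u h τ ≠ extEquiv w h' τ' := by
  subst h
  obtain rfl : m = k := by omega
  intro e
  apply huw
  rw [← extEquiv_zero u τ, e, extEquiv_zero]

theorem card_ne_add {V : Type*} [Fintype V] (v : V)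
    [Fintype {z : V | z ≠ v}] : Fintype.card V = Fintype.card {z : V | z ≠ v} + 1 := by
  classical
  rw [← Fintype.card_option]
  exact Fintype.card_congr (Equiv.optionSubtypeNe v).symm

/-- If `u` and `w` are distinct non-adjacent simplicial vertices of a chordal graph `G`,
then the number of perfect elimination orderings of `G` is at least the number of perfect
elimination orderings of `G - u` plus the number of perfect elimination orderings of
`G - w`. -/
theorem stmt14 {V : Type*} [Fintype V] [DecidableEq V] (G : SimpleGraph V)
    (hG : IsChordal G) (u w : V) (huw : u ≠ w) (hnadj : ¬ G.Adj u w)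
    (hu : G.IsClique (G.neighborSet u)) (hw : G.IsClique (G.neighborSet w)) :
    numPEO (G.induce {z : V | z ≠ u}) + numPEO (G.induce {z : V | z ≠ w}) ≤ numPEO G := by
  have cu := card_ne_add u
  have cw := card_ne_add w
  unfold numPEO
  rw [← Set.ncard_image_of_injective _ (extEquiv_inj u cu),
    ← Set.ncard_image_of_injective _ (extEquiv_inj w cw),
    ← Set.ncard_union_eq ?_ (Set.toFinite _) (Set.toFinite _)]
  · apply Set.ncard_le_ncard _ (Set.toFinite _)
    rintro _ (⟨τ, hτ, rfl⟩ | ⟨τ, hτ, rfl⟩)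
    · exact extEquiv_peo G u hu cu τ hτ
    · exact extEquiv_peo G w hw cw τ hτ
  · rw [Set.disjoint_left]
    rintro _ ⟨τ, -, rfl⟩ ⟨τ', -, e⟩
    exact extEquiv_ne u w huw cu cw τ τ' e.symm
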